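/- Let G_p be the full uncapacitated reduction graph, which for each assignment β to U_2 contains a copy of the gadget G_p^{α,β,γ}, where distinct copies share only the source α and sink γ and have no edges between them. Then for every pair (α, γ): the maximum α-γ flow in G_p is at most 2^{|U_2|}·m − 1 if some β makes (α, β, γ) satisfy at least p clauses, and is at least 2^{|U_2|}·m if for every β the triple (α, β, γ) satisfies at most p − 1 clauses. -/

import Mathlib

attribute [local instance] Classical.propDecidable

/-- A feasible `s`-`t` flow in a directed capacitated graph given by `cap`:
capacity constraints on every edge and conservation at every vertex other than `s`, `t`. -/
def IsFlow {V : Type*} [Fintype V] (cap : V → V → ℕ) (s t : V) (f : V → V → ℕ) : Prop :=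
  (∀ u v, f u v ≤ cap u v) ∧
  ∀ v, v ≠ s → v ≠ t → ∑ u, f u v = ∑ u, f v u

/-- The maximum `s`-`t` flow value: the supremum of net flow out of `s` over feasible flows. -/
noncomputable def maxFlow {V : Type*} [Fintype V] (cap : V → V → ℕ) (s t : V) : ℕ :=
  sSup {x : ℕ | ∃ f, IsFlow cap s t f ∧ ∑ v, f s v = x + ∑ v, f v s}


/-- A CNF clause over variables `U1 ⊕ U2 ⊕ U3`. -/
abbrev Clause3 (U1 U2 U3 : Type*) := Finset ((U1 ⊕ U2 ⊕ U3) × Bool)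

/-- The assignment `a` to `U1` satisfies the clause `C`. -/
def sat3A {U1 U2 U3 : Type*} (a : U1 → Bool) (C : Clause3 U1 U2 U3) : Prop :=
  ∃ l ∈ C, ∃ x : U1, l.1 = Sum.inl x ∧ a x = l.2

/-- The assignment `b` to `U2` satisfies the clause `C`. -/
def sat3B {U1 U2 U3 : Type*} (b : U2 → Bool) (C : Clause3 U1 U2 U3) : Prop :=
  ∃ l ∈ C, ∃ x : U2, l.1 = Sum.inr (Sum.inl x) ∧ b x = l.2

/-- The assignment `g` to `U3` satisfies the clause `C`. -/
def sat3G {U1 U2 U3 : Type*} (g : U3 → Bool) (C : Clause3 U1 U2 U3) : Prop :=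
  ∃ l ∈ C, ∃ x : U3, l.1 = Sum.inr (Sum.inr x) ∧ g x = l.2

/-- Internal vertices of one gadget copy (for one assignment `β` to `U2`). -/
inductive UInner (m p : ℕ) where
  | bl (i : Fin m)         -- β_i^l
  | br (i : Fin m)         -- β_i^r
  | bp                     -- β'
  | bpj (j : Fin (p - 1))  -- β'_j
  deriving DecidableEq, Fintype

/-- Vertices of the full uncapacitated reduction graph `G_p` (for fixed `α`, `γ`):
the source `α`, one copy of the gadget internals for each assignment `β : B`,
and the sink `γ`. Distinct copies share only the source and sink and there are
no edges between distinct copies. -/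
abbrev FullUV (B : Type*) (m p : ℕ) := Unit ⊕ (B × UInner m p) ⊕ Unit

/-- Unit-capacity edges of `G_p`: within each copy `β` the edges of `G_p^{α,β,γ}`. -/
noncomputable def fucap {B : Type*} {m p : ℕ} (sA : Fin m → Prop) (sB : B → Fin m → Prop)
    (sG : Fin m → Prop) : FullUV B m p → FullUV B m p → ℕ
  | Sum.inl _, Sum.inr (Sum.inl (b, .bl i)) => if ¬ sA i ∧ ¬ sB b i then 1 else 0
  | Sum.inl _, Sum.inr (Sum.inl (b, .br i)) => if sA i ∨ sB b i then 1 else 0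
  | Sum.inr (Sum.inl (b, .bl i)), Sum.inr (Sum.inr _) =>
      if ¬ sA i ∧ ¬ sB b i ∧ ¬ sG i then 1 else 0
  | Sum.inr (Sum.inl (b, .bl i)), Sum.inr (Sum.inl (b', .br j)) =>
      if b = b' ∧ i = j then 1 else 0
  | Sum.inr (Sum.inl (b, .br _)), Sum.inr (Sum.inl (b', .bp)) => if b = b' then 1 else 0
  | Sum.inr (Sum.inl (b, .bp)), Sum.inr (Sum.inl (b', .bpj _)) => if b = b' then 1 else 0
  | Sum.inr (Sum.inl (_, .bpj _)), Sum.inr (Sum.inr _) => 1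
  | _, _ => 0

lemma UInner.sum_univ {m p : ℕ} (F : UInner m p → ℕ) :
    ∑ w, F w = ∑ i, F (.bl i) + ∑ i, F (.br i) + F .bp + ∑ j, F (.bpj j) := by
  let e : ((Fin m ⊕ Fin m) ⊕ Unit) ⊕ Fin (p - 1) ≃ UInner m p :=
    { toFun := Sum.elim (Sum.elim (Sum.elim .bl .br) fun _ => .bp) .bpj
      invFun := fun w => match w with
        | .bl i => .inl (.inl (.inl i))
        | .br i => .inl (.inl (.inr i))
        | .bp => .inl (.inr ())
        | .bpj j => .inr j
      left_inv := by rintro (((i | i) | _) | j) <;> rfl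
      right_inv := by rintro (i | i | _ | j) <;> rfl }
  rw [← e.sum_comp F]
  simp [e]

lemma FullUV.sum_univ {B : Type*} [Fintype B] {m p : ℕ} (F : FullUV B m p → ℕ) :
    ∑ v, F v = F (Sum.inl ()) + ∑ b, ∑ w, F (Sum.inr (Sum.inl (b, w))) +
      F (Sum.inr (Sum.inr ())) := by
  simp [Fintype.sum_sum_type, Fintype.sum_prod_type, add_assoc]

section Flow

variable {B : Type*} {m p : ℕ} {sA : Fin m → Prop} {sB : B → Fin m → Prop}
  {sG : Fin m → Prop}

/-- The net flow out of the source is the total flow into the gadget copies. -/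
lemma value_eq_sum_source [Fintype B] {f : FullUV B m p → FullUV B m p → ℕ} {x : ℕ}
    (hcap : ∀ u v, f u v ≤ fucap sA sB sG u v)
    (hx : ∑ v, f (Sum.inl ()) v = x + ∑ v, f v (Sum.inl ())) :
    x = ∑ b, ∑ w, f (Sum.inl ()) (Sum.inr (Sum.inl (b, w))) := by
  have hin : ∑ v, f v (Sum.inl ()) = 0 := by
    refine Finset.sum_eq_zero fun v _ => Nat.le_zero.1 ((hcap _ _).trans (le_of_eq ?_))
    rcases v with _ | ⟨b, (i | i | _ | j)⟩ | _ <;> rfl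
  have hss : f (Sum.inl ()) (Sum.inl ()) = 0 := Nat.le_zero.1 (hcap _ _)
  have hst : f (Sum.inl ()) (Sum.inr (Sum.inr ())) = 0 := Nat.le_zero.1 (hcap _ _)
  rw [hin, FullUV.sum_univ, hss, hst] at hx
  omega

lemma sum_source_copy_le {f : FullUV B m p → FullUV B m p → ℕ}
    (hcap : ∀ u v, f u v ≤ fucap sA sB sG u v) (b : B) :
    ∑ w, f (Sum.inl ()) (Sum.inr (Sum.inl (b, w))) ≤ m := by
  calc ∑ w, f (Sum.inl ()) (Sum.inr (Sum.inl (b, w)))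
      ≤ ∑ w, fucap sA sB sG (Sum.inl ()) (Sum.inr (Sum.inl (b, w))) :=
        Finset.sum_le_sum fun w _ => hcap _ _
    _ = ∑ _i : Fin m, 1 := by
        rw [UInner.sum_univ]
        simp only [fucap, Finset.sum_const_zero, add_zero]
        rw [← Finset.sum_add_distrib]
        refine Finset.sum_congr rfl fun i _ => ?_
        by_cases h1 : sA i <;> by_cases h2 : sB b i <;> simp [h1, h2]
    _ = m := by simp

/-- A gadget copy passes on to the sink all it receives from the source. -/
lemma sum_source_copy_le_sum_sink [Fintype B] {f : FullUV B m p → FullUV B m p → ℕ}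
    (hf : IsFlow (fucap sA sB sG) (Sum.inl ()) (Sum.inr (Sum.inr ())) f) (b : B) :
    ∑ w, f (Sum.inl ()) (Sum.inr (Sum.inl (b, w))) ≤
      ∑ w, f (Sum.inr (Sum.inl (b, w))) (Sum.inr (Sum.inr ())) := by
  obtain ⟨hcap, hcons⟩ := hf
  have hcross : ∀ c c', c ≠ c' → ∀ w w',
      f (Sum.inr (Sum.inl (c, w))) (Sum.inr (Sum.inl (c', w'))) = 0 := by
    intro c c' h w w'
    refine Nat.le_zero.1 ((hcap _ _).trans (le_of_eq ?_))
    rcases w with i | i | _ | j <;> rcases w' with i' | i' | _ | j' <;> simp [fucap, h]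
  have hsrc : ∀ w, f (Sum.inr (Sum.inl (b, w))) (Sum.inl ()) = 0 := by
    intro w
    refine Nat.le_zero.1 ((hcap _ _).trans (le_of_eq ?_))
    rcases w with i | i | _ | j <;> rfl
  have key := Finset.sum_congr (rfl : (Finset.univ : Finset (UInner m p)) = Finset.univ)
    fun w _ => hcons (Sum.inr (Sum.inl (b, w))) (by simp) (by simp)
  have hin : ∀ w, ∑ c, ∑ w', f (Sum.inr (Sum.inl (c, w'))) (Sum.inr (Sum.inl (b, w))) =
      ∑ w', f (Sum.inr (Sum.inl (b, w'))) (Sum.inr (Sum.inl (b, w))) := fun w =>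
    Finset.sum_eq_single b (fun c _ h => Finset.sum_eq_zero fun w' _ => hcross c b h w' w)
      (by simp)
  have hout : ∀ w, ∑ c, ∑ w', f (Sum.inr (Sum.inl (b, w))) (Sum.inr (Sum.inl (c, w'))) =
      ∑ w', f (Sum.inr (Sum.inl (b, w))) (Sum.inr (Sum.inl (b, w'))) := fun w =>
    Finset.sum_eq_single b (fun c _ h => Finset.sum_eq_zero fun w' _ => hcross b c h.symm w w')
      (by simp)
  simp only [FullUV.sum_univ, hin, hout, hsrc, Finset.sum_add_distrib, zero_add] at key
  rw [Finset.sum_comm (f := fun w w' =>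
    f (Sum.inr (Sum.inl (b, w'))) (Sum.inr (Sum.inl (b, w))))] at key
  omega

lemma sum_sink_copy_add_card_le {f : FullUV B m p → FullUV B m p → ℕ}
    (hcap : ∀ u v, f u v ≤ fucap sA sB sG u v) (b : B) :
    ∑ w, f (Sum.inr (Sum.inl (b, w))) (Sum.inr (Sum.inr ())) +
      (Finset.univ.filter fun i => sA i ∨ sB b i ∨ sG i).card ≤ m + (p - 1) := by
  have h1 : ∑ w, f (Sum.inr (Sum.inl (b, w))) (Sum.inr (Sum.inr ())) ≤
      ∑ w, fucap (p := p) sA sB sG (Sum.inr (Sum.inl (b, w))) (Sum.inr (Sum.inr ())) :=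
    Finset.sum_le_sum fun w _ => hcap _ _
  have h2 : ∑ i, (if ¬ sA i ∧ ¬ sB b i ∧ ¬ sG i then 1 else 0) +
      (Finset.univ.filter fun i => sA i ∨ sB b i ∨ sG i).card = m := by
    rw [Finset.card_filter, ← Finset.sum_add_distrib]
    trans ∑ _i : Fin m, 1
    · refine Finset.sum_congr rfl fun i _ => ?_
      by_cases h1 : sA i <;> by_cases h2 : sB b i <;> by_cases h3 : sG i <;> simp [h1, h2, h3]
    · simp
  rw [UInner.sum_univ (fun w => fucap sA sB sG _ _)] at h1
  simp only [fucap, Finset.sum_const_zero, add_zero, Finset.sum_const, Finset.card_univ,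
    Fintype.card_fin, smul_eq_mul, mul_one] at h1
  omega

/-- The flow that routes an unsatisfied clause directly to the sink and the satisfied clauses of
copy `b` through the first `k b` vertices `bpj`. -/
noncomputable def clauseFlow (sA : Fin m → Prop) (sB : B → Fin m → Prop) (sG : Fin m → Prop)
    (k : B → ℕ) : FullUV B m p → FullUV B m p → ℕ
  | Sum.inl _, Sum.inr (Sum.inl (b, .bl i)) => if ¬ sA i ∧ ¬ sB b i then 1 else 0
  | Sum.inl _, Sum.inr (Sum.inl (b, .br i)) => if sA i ∨ sB b i then 1 else 0
  | Sum.inr (Sum.inl (b, .bl i)), Sum.inr (Sum.inr _) =>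
      if ¬ sA i ∧ ¬ sB b i ∧ ¬ sG i then 1 else 0
  | Sum.inr (Sum.inl (b, .bl i)), Sum.inr (Sum.inl (b', .br j)) =>
      if b = b' then if i = j then if ¬ sA i ∧ ¬ sB b i ∧ sG i then 1 else 0 else 0 else 0
  | Sum.inr (Sum.inl (b, .br i)), Sum.inr (Sum.inl (b', .bp)) =>
      if b = b' then if sA i ∨ sB b i ∨ sG i then 1 else 0 else 0
  | Sum.inr (Sum.inl (b, .bp)), Sum.inr (Sum.inl (b', .bpj j)) =>
      if b = b' then if j.val < k b then 1 else 0 else 0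
  | Sum.inr (Sum.inl (b, .bpj j)), Sum.inr (Sum.inr _) => if j.val < k b then 1 else 0
  | _, _ => 0

lemma isFlow_clauseFlow [Fintype B]
    (h : ∀ b, (Finset.univ.filter fun i => sA i ∨ sB b i ∨ sG i).card ≤ p - 1) :
    IsFlow (fucap (p := p) sA sB sG) (Sum.inl ()) (Sum.inr (Sum.inr ()))
      (clauseFlow sA sB sG fun b => (Finset.univ.filter fun i => sA i ∨ sB b i ∨ sG i).card) := by
  constructor
  · rintro (_ | ⟨b, (i | i | _ | j)⟩ | _) (_ | ⟨b', (i' | i' | _ | j')⟩ | _) <;>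
      simp only [fucap, clauseFlow, le_refl] <;> split_ifs <;> simp_all
  · rintro (_ | ⟨b, (i | i | _ | j)⟩ | _) hs ht
    · exact absurd rfl hs
    · simp only [FullUV.sum_univ, UInner.sum_univ, clauseFlow]
      by_cases h1 : sA i <;> by_cases h2 : sB b i <;> by_cases h3 : sG i <;> simp [h1, h2, h3]
    · simp only [FullUV.sum_univ, UInner.sum_univ, clauseFlow]
      by_cases h1 : sA i <;> by_cases h2 : sB b i <;> by_cases h3 : sG i <;> simp [h1, h2, h3]
    · have hk : ∑ j : Fin (p - 1), (if j.val <
          (Finset.univ.filter fun i => sA i ∨ sB b i ∨ sG i).card then 1 else 0) =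
          (Finset.univ.filter fun i => sA i ∨ sB b i ∨ sG i).card := by
        rw [← Finset.card_filter, Fin.card_filter_val_lt, min_eq_right (h b)]
      simp only [FullUV.sum_univ, UInner.sum_univ, clauseFlow, Finset.sum_const_zero, add_zero,
        zero_add]
      rw [Finset.sum_eq_single b (by simp +contextual) (by simp),
        Finset.sum_eq_single b (by simp +contextual [eq_comm]) (by simp)]
      simp only [if_true, hk]
      rw [Finset.card_filter]
    · simp only [FullUV.sum_univ, UInner.sum_univ, clauseFlow]
      simp
    · exact absurd rfl ht

lemma sum_source_clauseFlow [Fintype B] (k : B → ℕ) :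
    ∑ b, ∑ w, clauseFlow (p := p) sA sB sG k (Sum.inl ()) (Sum.inr (Sum.inl (b, w))) =
      Fintype.card B * m := by
  have : ∀ b, ∑ w, clauseFlow (p := p) sA sB sG k (Sum.inl ()) (Sum.inr (Sum.inl (b, w))) = m := by
    intro b
    rw [UInner.sum_univ]
    simp only [clauseFlow, Finset.sum_const_zero, add_zero]
    rw [← Finset.sum_add_distrib]
    trans ∑ _i : Fin m, 1
    · refine Finset.sum_congr rfl fun i _ => ?_
      by_cases h1 : sA i <;> by_cases h2 : sB b i <;> simp [h1, h2]
    · simp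
  simp [this]

lemma maxFlow_fucap_le_of_card [Fintype B] (hp1 : 1 ≤ p) (b : B)
    (h : p ≤ (Finset.univ.filter fun i => sA i ∨ sB b i ∨ sG i).card) :
    maxFlow (fucap (p := p) sA sB sG) (Sum.inl ()) (Sum.inr (Sum.inr ())) ≤
      Fintype.card B * m - 1 := by
  refine csSup_le' ?_
  rintro x ⟨f, hf, hx⟩
  rw [value_eq_sum_source hf.1 hx]
  have hlt : ∑ b, ∑ w, f (Sum.inl ()) (Sum.inr (Sum.inl (b, w))) < ∑ _b : B, m := by
    refine Finset.sum_lt_sum (fun c _ => sum_source_copy_le hf.1 c) ⟨b, Finset.mem_univ _, ?_⟩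
    have h1 := sum_source_copy_le_sum_sink hf b
    have h2 := sum_sink_copy_add_card_le hf.1 b
    omega
  simp only [Finset.sum_const, Finset.card_univ, smul_eq_mul] at hlt
  omega

lemma le_maxFlow_fucap_of_card [Fintype B]
    (h : ∀ b, (Finset.univ.filter fun i => sA i ∨ sB b i ∨ sG i).card ≤ p - 1) :
    Fintype.card B * m ≤
      maxFlow (fucap (p := p) sA sB sG) (Sum.inl ()) (Sum.inr (Sum.inr ())) := by
  refine le_csSup ⟨Fintype.card B * m, ?_⟩ ⟨_, isFlow_clauseFlow h, ?_⟩
  · rintro x ⟨f, hf, hx⟩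
    rw [value_eq_sum_source hf.1 hx]
    simpa using Finset.sum_le_sum fun b (_ : b ∈ Finset.univ) => sum_source_copy_le hf.1 b
  · rw [FullUV.sum_univ, sum_source_clauseFlow, Finset.sum_eq_zero]
    · change 0 + _ + 0 = _
      omega
    · rintro (_ | ⟨b, (i | i | _ | j)⟩ | _) _ <;> rfl

end Flow

/-- in the full graph `G_p` (union over all `2^{|U2|}` assignments `β` of
the gadgets, disjoint except at the source `α` and sink `γ`), the max `α`-`γ` flow is at
most `2^{|U2|}·m − 1` if some `β` makes `(α, β, γ)` satisfy at least `p` clauses, and at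
least `2^{|U2|}·m` if every `β` makes `(α, β, γ)` satisfy at most `p − 1` clauses. -/
theorem stmt10 {U1 U2 U3 : Type*} [Fintype U2] [DecidableEq U2] {m p : ℕ}
    (hp1 : 1 ≤ p) (hpm : p ≤ m) (F : Fin m → Clause3 U1 U2 U3)
    (a : U1 → Bool) (g : U3 → Bool) :
    ((∃ b : U2 → Bool, p ≤ (Finset.univ.filter fun i =>
        sat3A a (F i) ∨ sat3B b (F i) ∨ sat3G g (F i)).card) →
      maxFlow (fucap (B := U2 → Bool) (m := m) (p := p)
          (fun i => sat3A a (F i)) (fun b i => sat3B b (F i)) (fun i => sat3G g (F i)))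
        (Sum.inl ()) (Sum.inr (Sum.inr ())) ≤ 2 ^ Fintype.card U2 * m - 1)
    ∧ ((∀ b : U2 → Bool, (Finset.univ.filter fun i =>
        sat3A a (F i) ∨ sat3B b (F i) ∨ sat3G g (F i)).card ≤ p - 1) →
      2 ^ Fintype.card U2 * m ≤
        maxFlow (fucap (B := U2 → Bool) (m := m) (p := p)
          (fun i => sat3A a (F i)) (fun b i => sat3B b (F i)) (fun i => sat3G g (F i)))
        (Sum.inl ()) (Sum.inr (Sum.inr ()))) := by
  have hcard : Fintype.card (U2 → Bool) = 2 ^ Fintype.card U2 := by simp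
  rw [← hcard]
  exact ⟨fun ⟨b, hb⟩ => maxFlow_fucap_le_of_card hp1 b hb, le_maxFlow_fucap_of_card⟩
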